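/- Let r ∈ [1,3] be a real number and μ > 0, β > 0. Let u, v : ℝ² → ℝ² be smooth, compactly supported, divergence-free vector fields, set w = u − v, and let N ≥ 0 satisfy ∫_{ℝ²} |v(x)|⁴ dx ≤ N⁴. Then μ ∫_{ℝ²} |∇w|² dx + ∫_{ℝ²} Σ_{i,j} (u_i ∂_i u_j − v_i ∂_i v_j) w_j dx + β ∫_{ℝ²} (|u|^{r−1}u − |v|^{r−1}v)·w dx + (27/(32μ³)) N⁴ ∫_{ℝ²} |w|² dx ≥ 0, where |∇w|² = Σ_{i,j} (∂w_j/∂x_i)², |·| is the Euclidean norm, · the Euclidean inner product, and integrals are with respect to Lebesgue measure. -/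

import Mathlib

open MeasureTheory
open scoped RealInnerProductSpace

/-- Planar Gagliardo–Nirenberg inequality in coordinates. -/
lemma cbf_sobolev (f g : EuclideanSpace ℝ (Fin 2) → ℝ) (hf : ContDiff ℝ 1 f)
    (hfs : HasCompactSupport f) (hg : Integrable g)
    (hfg : ∀ x, ∑ i, |fderiv ℝ f x (EuclideanSpace.single i 1)| ≤ g x) :
    ∫ x, f x ^ 2 ≤ (∫ x, g x) ^ 2 := by
  have hg0 : ∀ x, 0 ≤ g x := fun x =>
    le_trans (Finset.sum_nonneg fun i _ => abs_nonneg _) (hfg x)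
  let e : (Fin 2 → ℝ) ≃L[ℝ] EuclideanSpace ℝ (Fin 2) := (EuclideanSpace.equiv (Fin 2) ℝ).symm
  have hmp : MeasurePreserving (e : (Fin 2 → ℝ) → EuclideanSpace ℝ (Fin 2)) :=
    PiLp.volume_preserving_toLp (Fin 2)
  have hme : MeasurableEmbedding (e : (Fin 2 → ℝ) → EuclideanSpace ℝ (Fin 2)) :=
    e.toHomeomorph.measurableEmbedding
  have hp : Real.HolderConjugate (Fintype.card (Fin 2)) 2 := by
    simpa using (Real.HolderConjugate.two_two)
  have key := lintegral_pow_le_pow_lintegral_fderiv_aux hp (u := f ∘ e)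
    (hf.comp e.contDiff) (hfs.comp_homeomorph e.toHomeomorph)
  have hb : ∀ y, ‖fderiv ℝ (f ∘ e) y‖ₑ ≤ ENNReal.ofReal (g (e y)) := by
    intro y
    rw [← ofReal_norm]
    apply ENNReal.ofReal_le_ofReal
    refine le_trans ?_ (hfg (e y))
    have h1 : fderiv ℝ (f ∘ e) y = (fderiv ℝ f (e y)).comp (e : (Fin 2 → ℝ) →L[ℝ] _) := by
      rw [fderiv_comp _ (hf.differentiable one_ne_zero _) e.differentiableAt, e.fderiv]
    rw [h1]
    refine ContinuousLinearMap.opNorm_le_bound _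
      (Finset.sum_nonneg fun i _ => abs_nonneg _) fun z => ?_
    have h2 : e z = ∑ i, z i • (EuclideanSpace.single i (1:ℝ)) := by
      ext j
      fin_cases j <;> simp [e, Fin.sum_univ_two]
    simp only [ContinuousLinearMap.comp_apply, ContinuousLinearEquiv.coe_coe]
    rw [h2, map_sum, Finset.sum_mul]
    refine (norm_sum_le _ _).trans (Finset.sum_le_sum fun i _ => ?_)
    rw [map_smul, norm_smul, mul_comm]
    exact mul_le_mul_of_nonneg_left (norm_le_pi_norm z i) (abs_nonneg _)
  have hf2 : Integrable fun x => f x ^ 2 :=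
    (hf.continuous.pow 2).integrable_of_hasCompactSupport
      (HasCompactSupport.intro hfs (fun x hx => by simp [image_eq_zero_of_notMem_tsupport hx]))
  have hL : ∫⁻ x, ‖(f ∘ e) x‖ₑ ^ (2:ℝ) = ENNReal.ofReal (∫ x, f x ^ 2) := by
    rw [ofReal_integral_eq_lintegral_ofReal hf2 (Filter.Eventually.of_forall fun x => sq_nonneg _),
      ← hmp.lintegral_comp_emb hme]
    refine lintegral_congr fun x => ?_
    rw [← ofReal_norm, ENNReal.rpow_ofNat, ← ENNReal.ofReal_pow (norm_nonneg _)]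
    simp
  have hR : ∫⁻ x, ENNReal.ofReal (g (e x)) = ENNReal.ofReal (∫ x, g x) := by
    rw [ofReal_integral_eq_lintegral_ofReal hg (Filter.Eventually.of_forall hg0),
      ← hmp.lintegral_comp_emb hme]
  rw [hL] at key
  have h3 := key.trans (ENNReal.rpow_le_rpow ((lintegral_mono hb).trans_eq hR) (by norm_num))
  rw [ENNReal.rpow_ofNat, ← ENNReal.ofReal_pow (integral_nonneg hg0)] at h3
  exact (ENNReal.ofReal_le_ofReal_iff (sq_nonneg _)).1 h3

lemma cbf_cauchy (f g : EuclideanSpace ℝ (Fin 2) → ℝ) (hf : Integrable fun x => f x ^ 2)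
    (hg : Integrable fun x => g x ^ 2) (hfg : Integrable fun x => f x * g x) :
    (∫ x, f x * g x) ^ 2 ≤ (∫ x, f x ^ 2) * ∫ x, g x ^ 2 := by
  have h : ∀ t : ℝ, 0 ≤ (∫ x, g x ^ 2) * (t * t) + (2 * ∫ x, f x * g x) * t + ∫ x, f x ^ 2 := by
    intro t
    have h0 : 0 ≤ ∫ x, (f x + t * g x) ^ 2 := integral_nonneg fun x => sq_nonneg _
    have h1 : ∫ x, (f x + t * g x) ^ 2 =
        (∫ x, g x ^ 2) * (t * t) + (2 * ∫ x, f x * g x) * t + ∫ x, f x ^ 2 := by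
      have : ∀ x, (f x + t * g x) ^ 2 =
        (t * t) * g x ^ 2 + (2 * t) * (f x * g x) + f x ^ 2 := fun x => by ring
      simp_rw [this]
      have h5 : Integrable fun x => (t * t) * g x ^ 2 + (2 * t) * (f x * g x) :=
        (hg.const_mul _).add (hfg.const_mul _)
      rw [integral_add h5 hf,
        integral_add (hg.const_mul _) (hfg.const_mul _), integral_const_mul, integral_const_mul]
      ring
    rwa [h1] at h0
  have := discrim_le_zero h
  rw [discrim] at this
  nlinarith

/-- A divergence-free compactly supported field is orthogonal to gradients. -/
lemma cbf_div (U : EuclideanSpace ℝ (Fin 2) → EuclideanSpace ℝ (Fin 2))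
    (h : EuclideanSpace ℝ (Fin 2) → ℝ) (hU : ContDiff ℝ 1 U) (hUs : HasCompactSupport U)
    (hdiv : ∀ x, ∑ i, fderiv ℝ U x (EuclideanSpace.single i 1) i = 0)
    (hh : ContDiff ℝ 1 h) :
    Integrable (fun x => ∑ i, U x i * fderiv ℝ h x (EuclideanSpace.single i 1)) ∧
    ∫ x, ∑ i, U x i * fderiv ℝ h x (EuclideanSpace.single i 1) = 0 := by
  have hUi : ∀ i, ContDiff ℝ 1 fun x => U x i := fun i => by fun_prop
  have hfd : ∀ i x, fderiv ℝ (fun x => U x i) x (EuclideanSpace.single i 1)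
      = fderiv ℝ U x (EuclideanSpace.single i 1) i := by
    intro i x
    have := ((EuclideanSpace.proj i : EuclideanSpace ℝ (Fin 2) →L[ℝ] ℝ).hasFDerivAt.comp x
      (hU.differentiable one_ne_zero x).hasFDerivAt).fderiv
    have h2 : fderiv ℝ (fun x => U x i) x = _ := this
    rw [h2]; rfl
  have hcU : Continuous (fderiv ℝ U) := hU.continuous_fderiv one_ne_zero
  have hch : Continuous (fderiv ℝ h) := hh.continuous_fderiv one_ne_zero
  have hhc := hh.continuous
  have hUc := hU.continuous
  have i1 : ∀ i, Integrable fun x => U x i * fderiv ℝ h x (EuclideanSpace.single i 1) := by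
    intro i
    refine Continuous.integrable_of_hasCompactSupport (by fun_prop)
      (HasCompactSupport.intro hUs fun x hx => ?_)
    simp [image_eq_zero_of_notMem_tsupport hx]
  have i2 : ∀ i, Integrable fun x => fderiv ℝ U x (EuclideanSpace.single i 1) i * h x := by
    intro i
    refine Continuous.integrable_of_hasCompactSupport (by fun_prop)
      (HasCompactSupport.intro (hUs.fderiv (𝕜 := ℝ)) fun x hx => ?_)
    simp [image_eq_zero_of_notMem_tsupport hx]
  have i3 : ∀ i, Integrable fun x => U x i * h x := by
    intro i
    refine Continuous.integrable_of_hasCompactSupport (by fun_prop)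
      (HasCompactSupport.intro hUs fun x hx => ?_)
    simp [image_eq_zero_of_notMem_tsupport hx]
  refine ⟨integrable_finsetSum _ fun i _ => i1 i, ?_⟩
  rw [integral_finsetSum _ fun i _ => i1 i]
  have hI : ∀ i, ∫ x, U x i * fderiv ℝ h x (EuclideanSpace.single i 1)
      = - ∫ x, fderiv ℝ U x (EuclideanSpace.single i 1) i * h x := by
    intro i
    have := integral_mul_fderiv_eq_neg_fderiv_mul_of_integrable (μ := volume)
      (f := fun x => U x i) (g := h) (v := EuclideanSpace.single i 1)
      (by simpa only [hfd] using i2 i) (i1 i) (i3 i)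
      (fun x _ => (hUi i).differentiable one_ne_zero x)
      (fun x _ => hh.differentiable one_ne_zero x)
    simpa only [hfd] using this
  simp_rw [hI]
  rw [Finset.sum_neg_distrib, ← integral_finsetSum _ fun i _ => i2 i]
  simp_rw [← Finset.sum_mul, hdiv]
  simp

lemma cbf_forch (s : ℝ) (hs : 0 ≤ s) (a b : EuclideanSpace ℝ (Fin 2)) :
    0 ≤ ⟪(‖a‖ ^ s) • a - (‖b‖ ^ s) • b, a - b⟫ := by
  have hA : 0 ≤ ‖a‖ ^ s := Real.rpow_nonneg (norm_nonneg _) _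
  have hB : 0 ≤ ‖b‖ ^ s := Real.rpow_nonneg (norm_nonneg _) _
  have hab := real_inner_le_norm a b
  have e : ⟪(‖a‖ ^ s) • a - (‖b‖ ^ s) • b, a - b⟫ =
      ‖a‖ ^ s * ‖a‖ ^ 2 + ‖b‖ ^ s * ‖b‖ ^ 2 - (‖a‖ ^ s + ‖b‖ ^ s) * ⟪a, b⟫ := by
    simp only [inner_sub_left, inner_sub_right, real_inner_smul_left, real_inner_self_eq_norm_sq,
      real_inner_comm a b]
    ring
  rw [e]
  have h1 : 0 ≤ (‖a‖ ^ s * ‖a‖ - ‖b‖ ^ s * ‖b‖) * (‖a‖ - ‖b‖) := by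
    rcases le_total ‖a‖ ‖b‖ with h | h
    · have := mul_le_mul (Real.rpow_le_rpow (norm_nonneg _) h hs) h (norm_nonneg _) hB
      exact mul_nonneg_of_nonpos_of_nonpos (by linarith) (by linarith)
    · have := mul_le_mul (Real.rpow_le_rpow (norm_nonneg _) h hs) h (norm_nonneg _) hA
      exact mul_nonneg (by linarith) (by linarith)
  nlinarith [mul_le_mul_of_nonneg_left hab (add_nonneg hA hB)]

lemma cbf_young (μ P Q M J : ℝ) (hμ : 0 < μ) (hP : 0 ≤ P) (hQ : 0 ≤ Q) (hM : 0 ≤ M)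
    (hJ : J ^ 4 ≤ 8 * P ^ 3 * Q * M) : J ≤ μ * P + 27 / (32 * μ ^ 3) * M * Q := by
  set K := 27 / (32 * μ ^ 3) * M * Q with hK
  have hK0 : 0 ≤ K := by positivity
  have ha : 0 ≤ μ * P := by positivity
  have h1 : 256 * ((μ * P) ^ 3 * K) = 27 * (8 * P ^ 3 * Q * M) := by
    rw [hK]; field_simp; ring
  have h2 : 27 * (μ * P + K) ^ 4 - 256 * ((μ * P) ^ 3 * K)
      = (μ * P - 3 * K) ^ 2 * (27 * (μ * P) ^ 2 + 14 * (μ * P) * K + 3 * K ^ 2) := by ring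
  have h3 : 0 ≤ (μ * P - 3 * K) ^ 2 * (27 * (μ * P) ^ 2 + 14 * (μ * P) * K + 3 * K ^ 2) := by
    positivity
  have h4 : J ^ 4 ≤ (μ * P + K) ^ 4 := by linarith
  exact (le_abs_self J).trans (by
    have := (pow_le_pow_iff_left₀ (abs_nonneg J) (by positivity : 0 ≤ μ * P + K)
      (n := 4) (by norm_num)).1 (by rwa [Even.pow_abs (by decide)])
    exact this)

lemma cbf_pt_trilinear (w0 w1 v0 v1 a b c d : ℝ) :
    |w0 * v0 * a + w0 * v1 * b + (w1 * v0 * c + w1 * v1 * d)| ≤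
      √(a ^ 2 + b ^ 2 + (c ^ 2 + d ^ 2)) * (√(w0 ^ 2 + w1 ^ 2) * √(v0 ^ 2 + v1 ^ 2)) := by
  rw [← Real.sqrt_mul (by positivity), ← Real.sqrt_mul (by positivity)]
  apply Real.abs_le_sqrt
  nlinarith [sq_nonneg (w0 * v0 * b - w0 * v1 * a), sq_nonneg (w0 * v0 * c - w1 * v0 * a),
    sq_nonneg (w0 * v0 * d - w1 * v1 * a), sq_nonneg (w0 * v1 * c - w1 * v0 * b),
    sq_nonneg (w0 * v1 * d - w1 * v1 * b), sq_nonneg (w1 * v0 * d - w1 * v1 * c)]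

lemma cbf_pt_grad (w0 w1 a b c d : ℝ) :
    |2 * (w0 * a + w1 * b)| + |2 * (w0 * c + w1 * d)| ≤
      √8 * (√(a ^ 2 + b ^ 2 + (c ^ 2 + d ^ 2)) * √(w0 ^ 2 + w1 ^ 2)) := by
  rw [← Real.sqrt_mul (by positivity), ← Real.sqrt_mul (by positivity)]
  apply Real.le_sqrt_of_sq_le
  have h1 : (|2 * (w0 * a + w1 * b)| + |2 * (w0 * c + w1 * d)|) ^ 2 ≤
      2 * ((2 * (w0 * a + w1 * b)) ^ 2 + (2 * (w0 * c + w1 * d)) ^ 2) := by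
    have := sq_abs (2 * (w0 * a + w1 * b))
    have := sq_abs (2 * (w0 * c + w1 * d))
    nlinarith [sq_nonneg (|2 * (w0 * a + w1 * b)| - |2 * (w0 * c + w1 * d)|)]
  nlinarith [sq_nonneg (w0 * b - w1 * a), sq_nonneg (w0 * d - w1 * c)]

/-- derivative of an inner product in coordinates -/
lemma cbf_fderiv_inner (a b : EuclideanSpace ℝ (Fin 2) → EuclideanSpace ℝ (Fin 2))
    (ha : ContDiff ℝ 1 a) (hb : ContDiff ℝ 1 b) (x e : EuclideanSpace ℝ (Fin 2)) :
    fderiv ℝ (fun x => ⟪a x, b x⟫) x e =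
      (a x 0 * fderiv ℝ b x e 0 + a x 1 * fderiv ℝ b x e 1) +
      (fderiv ℝ a x e 0 * b x 0 + fderiv ℝ a x e 1 * b x 1) := by
  rw [fderiv_inner_apply ℝ (ha.differentiable one_ne_zero x) (hb.differentiable one_ne_zero x)]
  simp only [PiLp.inner_apply, Fin.sum_univ_two, RCLike.inner_apply, conj_trivial]
  ring

/-- Local monotonicity of the 2D CBF operator on `L⁴`-balls of radius `N`, for `r ∈ [1,3]`:
`μ‖∇w‖² + ⟨B(u) − B(v), w⟩ + β⟨C(u) − C(v), w⟩ + (27/(32μ³))N⁴‖w‖² ≥ 0` with `w = u − v`. -/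
theorem cbf_local_monotonicity_2d (r μ β N : ℝ)
    (hr : r ∈ Set.Icc (1 : ℝ) 3) (hμ : 0 < μ) (hβ : 0 < β) (hN : 0 ≤ N)
    (u v w : EuclideanSpace ℝ (Fin 2) → EuclideanSpace ℝ (Fin 2))
    (hu : ContDiff ℝ (⊤ : ℕ∞) u) (hv : ContDiff ℝ (⊤ : ℕ∞) v)
    (hus : HasCompactSupport u) (hvs : HasCompactSupport v)
    (hdivu : ∀ x, ∑ i, fderiv ℝ u x (EuclideanSpace.single i 1) i = 0)
    (hdivv : ∀ x, ∑ i, fderiv ℝ v x (EuclideanSpace.single i 1) i = 0)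
    (hw : ∀ x, w x = u x - v x)
    (hvN : (∫ x, ‖v x‖ ^ 4) ≤ N ^ 4) :
    0 ≤ μ * (∫ x, ∑ i, ∑ j, (fderiv ℝ w x (EuclideanSpace.single i 1) j) ^ 2) +
        (∫ x, ∑ i, ∑ j,
          (u x i * fderiv ℝ u x (EuclideanSpace.single i 1) j -
            v x i * fderiv ℝ v x (EuclideanSpace.single i 1) j) * w x j) +
        β * (∫ x, ⟪(‖u x‖ ^ (r - 1)) • u x - (‖v x‖ ^ (r - 1)) • v x, w x⟫) +
        27 / (32 * μ ^ 3) * N ^ 4 * ∫ x, ‖w x‖ ^ 2 := by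
  have hu1 : ContDiff ℝ 1 u := hu.of_le (by exact_mod_cast le_top)
  have hv1 : ContDiff ℝ 1 v := hv.of_le (by exact_mod_cast le_top)
  have hwe : w = fun x => u x - v x := funext hw
  have hw1 : ContDiff ℝ 1 w := by rw [hwe]; exact hu1.sub hv1
  have hws : HasCompactSupport w := by
    rw [hwe]; exact hus.sub hvs
  have hfw : ∀ x, fderiv ℝ w x = fderiv ℝ u x - fderiv ℝ v x := by
    intro x
    rw [hwe]
    exact fderiv_fun_sub (hu1.differentiable one_ne_zero x) (hv1.differentiable one_ne_zero x)
  have hdivw : ∀ x, ∑ i, fderiv ℝ w x (EuclideanSpace.single i 1) i = 0 := by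
    intro x
    have h1 := hdivu x
    have h2 := hdivv x
    simp only [Fin.sum_univ_two] at h1 h2 ⊢
    simp only [hfw, sub_apply, PiLp.sub_apply]
    linarith
  have hcw : Continuous w := hw1.continuous
  have hcv : Continuous v := hv1.continuous
  have hcu : Continuous u := hu1.continuous
  have hcdw : Continuous (fderiv ℝ w) := hw1.continuous_fderiv one_ne_zero
  -- abbreviations
  set D : EuclideanSpace ℝ (Fin 2) → ℝ :=
    fun x => ∑ i, ∑ j, (fderiv ℝ w x (EuclideanSpace.single i 1) j) ^ 2 with hD
  have hcD : Continuous D := by rw [hD]; fun_prop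
  have hD0 : ∀ x, 0 ≤ D x := fun x =>
    Finset.sum_nonneg fun i _ => Finset.sum_nonneg fun j _ => sq_nonneg _
  have hDi : Integrable D := by
    refine hcD.integrable_of_hasCompactSupport
      (HasCompactSupport.intro (hws.fderiv (𝕜 := ℝ)) fun x hx => ?_)
    simp [hD, image_eq_zero_of_notMem_tsupport hx]
  have h_supp : ∀ f : EuclideanSpace ℝ (Fin 2) → ℝ, Continuous f → (∀ x, w x = 0 → f x = 0) →
      Integrable f := fun f hf h0 => hf.integrable_of_hasCompactSupport
      (HasCompactSupport.intro hws fun x hx => h0 x (image_eq_zero_of_notMem_tsupport hx))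
  have hDs : ∀ x, √(D x) ^ 2 = D x := fun x => Real.sq_sqrt (hD0 x)
  have hcsD : Continuous fun x => √(D x) := hcD.sqrt
  have hnorm : ∀ y : EuclideanSpace ℝ (Fin 2), ‖y‖ = √(y 0 ^ 2 + y 1 ^ 2) := by
    intro y; rw [EuclideanSpace.norm_eq]; simp [Fin.sum_univ_two]
  -- Ladyzhenskaya
  have hlad : ∫ x, ‖w x‖ ^ 4 ≤ 8 * ((∫ x, D x) * ∫ x, ‖w x‖ ^ 2) := by
    have hI : Integrable fun x => √(D x) * ‖w x‖ :=
      h_supp _ (by fun_prop) (fun x hx => by simp [hx])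
    have h1 := cbf_sobolev (fun x => ⟪w x, w x⟫) (fun x => √8 * (√(D x) * ‖w x‖))
      (hw1.inner ℝ hw1)
      (HasCompactSupport.intro hws fun x hx => by simp [image_eq_zero_of_notMem_tsupport hx])
      (hI.const_mul _) (by
        intro x
        have := cbf_pt_grad (w x 0) (w x 1) (fderiv ℝ w x (EuclideanSpace.single 0 1) 0)
          (fderiv ℝ w x (EuclideanSpace.single 0 1) 1) (fderiv ℝ w x (EuclideanSpace.single 1 1) 0)
          (fderiv ℝ w x (EuclideanSpace.single 1 1) 1)
        simp only [Fin.sum_univ_two, cbf_fderiv_inner w w hw1 hw1, hD, hnorm]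
        refine le_trans (le_of_eq ?_) this
        congr 2 <;> ring)
    have h2 := cbf_cauchy (fun x => √(D x)) (fun x => ‖w x‖) (by simpa only [hDs] using hDi)
      (h_supp _ (by fun_prop) (fun x hx => by simp [hx])) hI
    simp only [hDs] at h2
    rw [integral_const_mul, mul_pow, Real.sq_sqrt (by norm_num)] at h1
    have h3 : ∀ x, ⟪w x, w x⟫ ^ 2 = ‖w x‖ ^ 4 := fun x => by
      rw [real_inner_self_eq_norm_sq]; ring
    simp only [h3] at h1
    linarith
  -- the trilinear term
  set T : EuclideanSpace ℝ (Fin 2) → ℝ := fun x =>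
    ∑ i, ∑ j, w x i * v x j * fderiv ℝ w x (EuclideanSpace.single i 1) j with hT
  have hTi : Integrable T := h_supp _ (by rw [hT]; fun_prop) (fun x hx => by simp [hT, hx])
  have hB : (∫ x, ∑ i, ∑ j,
          (u x i * fderiv ℝ u x (EuclideanSpace.single i 1) j -
            v x i * fderiv ℝ v x (EuclideanSpace.single i 1) j) * w x j) = - ∫ x, T x := by
    obtain ⟨i1, e1⟩ := cbf_div u (fun x => ⟪w x, w x⟫) hu1 hus hdivu (hw1.inner ℝ hw1)
    obtain ⟨i2, e2⟩ := cbf_div w (fun x => ⟪v x, w x⟫) hw1 hws hdivw (hv1.inner ℝ hw1)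
    have hpt : ∀ x, ∑ i, ∑ j,
          (u x i * fderiv ℝ u x (EuclideanSpace.single i 1) j -
            v x i * fderiv ℝ v x (EuclideanSpace.single i 1) j) * w x j =
        (1 / 2) * (∑ i, u x i * fderiv ℝ (fun x => ⟪w x, w x⟫) x (EuclideanSpace.single i 1)) +
        (∑ i, w x i * fderiv ℝ (fun x => ⟪v x, w x⟫) x (EuclideanSpace.single i 1)) - T x := by
      intro x
      simp only [hT, Fin.sum_univ_two, cbf_fderiv_inner w w hw1 hw1,
        cbf_fderiv_inner v w hv1 hw1]
      simp only [hfw, hw, sub_apply, PiLp.sub_apply]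
      ring
    simp_rw [hpt]
    have i3 : Integrable fun x =>
        (1 / 2) * (∑ i, u x i * fderiv ℝ (fun x => ⟪w x, w x⟫) x (EuclideanSpace.single i 1)) +
        (∑ i, w x i * fderiv ℝ (fun x => ⟪v x, w x⟫) x (EuclideanSpace.single i 1)) :=
      (i1.const_mul _).add i2
    rw [integral_sub i3 hTi, integral_add (i1.const_mul _) i2,
      integral_const_mul, e1, e2]
    simp
  have hvw : Integrable fun x => (‖w x‖ * ‖v x‖) ^ 2 :=
    h_supp _ (by fun_prop) (fun x hx => by simp [hx])
  have hDwv : Integrable fun x => √(D x) * (‖w x‖ * ‖v x‖) :=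
    h_supp _ (by fun_prop) (fun x hx => by simp [hx])
  have hTle : ∫ x, T x ≤ ∫ x, √(D x) * (‖w x‖ * ‖v x‖) := by
    refine integral_mono hTi hDwv fun x => ?_
    have := cbf_pt_trilinear (w x 0) (w x 1) (v x 0) (v x 1)
      (fderiv ℝ w x (EuclideanSpace.single 0 1) 0)
      (fderiv ℝ w x (EuclideanSpace.single 0 1) 1) (fderiv ℝ w x (EuclideanSpace.single 1 1) 0)
      (fderiv ℝ w x (EuclideanSpace.single 1 1) 1)
    simp only [hT, hD, hnorm, Fin.sum_univ_two]
    exact (le_abs_self _).trans this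
  have hc1 := cbf_cauchy (fun x => √(D x)) (fun x => ‖w x‖ * ‖v x‖)
    (by simpa only [hDs] using hDi) hvw hDwv
  simp only [hDs] at hc1
  have hp4 : ∀ y : EuclideanSpace ℝ (Fin 2), (‖y‖ ^ 2) ^ 2 = ‖y‖ ^ 4 := fun y => by ring
  have hv4 : Integrable fun x => (‖v x‖ ^ 2) ^ 2 :=
    Continuous.integrable_of_hasCompactSupport (by fun_prop)
      (HasCompactSupport.intro hvs fun x hx => by simp [image_eq_zero_of_notMem_tsupport hx])
  have hc2 := cbf_cauchy (fun x => ‖w x‖ ^ 2) (fun x => ‖v x‖ ^ 2)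
    (h_supp _ (by fun_prop) (fun x hx => by simp [hx])) hv4
    (h_supp _ (by fun_prop) (fun x hx => by simp [hx]))
  simp only [hp4, ← mul_pow] at hc2
  have hP : 0 ≤ ∫ x, D x := integral_nonneg hD0
  have hQ : 0 ≤ ∫ x, ‖w x‖ ^ 2 := integral_nonneg fun x => by positivity
  have hS : 0 ≤ ∫ x, (‖w x‖ * ‖v x‖) ^ 2 := integral_nonneg fun x => by positivity
  have hV : 0 ≤ ∫ x, ‖v x‖ ^ 4 := integral_nonneg fun x => by positivity
  have hJ := cbf_young μ (∫ x, D x) (∫ x, ‖w x‖ ^ 2) (N ^ 4)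
    (∫ x, √(D x) * (‖w x‖ * ‖v x‖)) hμ hP hQ (by positivity) (by
      generalize (∫ x, √(D x) * (‖w x‖ * ‖v x‖)) = J at *
      calc J ^ 4 = (J ^ 2) ^ 2 := by ring
        _ ≤ ((∫ x, D x) * ∫ x, (‖w x‖ * ‖v x‖) ^ 2) ^ 2 :=
          pow_le_pow_left₀ (sq_nonneg _) hc1 2
        _ = (∫ x, D x) ^ 2 * (∫ x, (‖w x‖ * ‖v x‖) ^ 2) ^ 2 := by ring
        _ ≤ (∫ x, D x) ^ 2 * ((8 * ((∫ x, D x) * ∫ x, ‖w x‖ ^ 2)) * N ^ 4) := by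
          refine mul_le_mul_of_nonneg_left (hc2.trans ?_) (sq_nonneg _)
          exact mul_le_mul hlad hvN hV (by positivity)
        _ = _ := by ring)
  have hF : 0 ≤ ∫ x, ⟪(‖u x‖ ^ (r - 1)) • u x - (‖v x‖ ^ (r - 1)) • v x, w x⟫ := by
    refine integral_nonneg fun x => ?_
    rw [hw x]
    exact cbf_forch (r - 1) (by linarith [hr.1]) (u x) (v x)
  rw [hB]
  have := mul_nonneg hβ.le hF
  linarith
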